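/- Let 1 < p < ∞ and β > 0, and let T be the bounded linear operator on L^p((0,∞), ℂ) induced by 𝒞_β^*. Then the spectrum of T equals Γ(β+1) · closure{ Γ(1/p + it)/Γ(β + 1/p + it) : t ∈ ℝ }, where the closure is taken in ℂ. -/

import Mathlib

/-!
In logarithmic coordinates `F(x) = e^{x/p} f(e^x)`, an isometry of `L^p((0,∞))` onto `L^p(ℝ)`
(`logIsometry`), the operator becomes the convolution `S F(x) = ∫ k(y) F(x + y) dy` with the
integrable kernel `k(y) = β (1 - e^{-y})^{β-1} e^{-y/p}` on `y > 0` (`cesaroKernel`). The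
substitution `u = e^{-y}` and the Beta integral give
`∫ k(y) e^{-iτy} dy = Γ(β+1) Γ(1/p+iτ) / Γ(β+1/p+iτ)` (`fourier_cesaroKernel`). It remains to see
that the spectrum of a convolution operator with `L¹` kernel on `L^p(ℝ)` is the closure of the
range of the Fourier transform of its kernel (`spectrum_convolution`).

*Upper bound* (`eq_zero_or_fourier_of_mem_spectrum`). Let `U_y` be the translations, so that
`S = ∫ k(y) U_y dy` strongly. The bicommutant `A` of `S` and all the `U_y` is a closed commutative
algebra, so by Gelfand theory any `l ∈ σ(S)` is `φ(S)` for a character `φ` of `A`. The map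
`y ↦ U_y S` is continuous in *operator norm*, because translation is continuous in `L¹`; hence if
`l ≠ 0`, then `y ↦ φ(U_y) = φ(U_y S) / l` is a continuous bounded character of `ℝ`, that is,
`e^{iτy}`. Since `S² = ∫ k(y) U_y S dy` converges in norm, applying `φ` gives
`l² = l ∫ k(y) e^{iτy} dy`. If `l = 0`, the Riemann–Lebesgue lemma puts `l` in the closure.

*Lower bound* (`fourier_mem_spectrum`). The functions `e^{iτx} 1_{(0,n+1]}(x)` are approximate
common eigenvectors of all translations, hence approximate eigenvectors of `S`, and the spectrum
is closed.
-/

open MeasureTheory Set Pointwise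

/-- The companion generalized Cesàro operator
`𝒞_β^* f(t) = β ∫ₜ^∞ ((s-t)^(β-1)/s^β) f(s) ds`. -/
noncomputable def cesaroStar (β : ℝ) (f : ℝ → ℂ) (t : ℝ) : ℂ :=
  (β : ℂ) * ∫ s in Ioi t, (((s - t) ^ (β - 1) / s ^ β : ℝ) : ℂ) * f s

open Filter Topology

/-! ### Bounded continuous characters of the real line -/

/-- A continuous multiplicative function on `ℝ` is differentiable, being a multiple of
`y ↦ ∫_y^{y+c} χ`, and therefore solves `χ' = a χ`. -/
theorem exists_exp_of_bounded_character (χ : ℝ → ℂ) (h0 : χ 0 = 1)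
    (hadd : ∀ x y, χ (x + y) = χ x * χ y) (hc : Continuous χ) (C : ℝ) (hb : ∀ x, ‖χ x‖ ≤ C) :
    ∃ τ : ℝ, ∀ y : ℝ, χ y = Complex.exp (τ * y * Complex.I) := by
  have hder : ∀ x, HasDerivAt (fun x => ∫ t in (0:ℝ)..x, χ t) (χ x) x := fun x =>
    intervalIntegral.integral_hasDerivAt_right (hc.intervalIntegrable _ _)
      (hc.stronglyMeasurableAtFilter _ _) hc.continuousAt
  obtain ⟨c, hcne⟩ : ∃ c : ℝ, (∫ t in (0:ℝ)..c, χ t) ≠ 0 := by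
    by_contra! hall
    have h1 := hder 0
    have h2 : (fun x => ∫ t in (0:ℝ)..x, χ t) = fun _ => 0 := funext hall
    rw [h2] at h1
    have := h1.unique (hasDerivAt_const (0:ℝ) (0:ℂ))
    rw [h0] at this
    exact one_ne_zero this
  set I := ∫ t in (0:ℝ)..c, χ t with hI
  have hform : ∀ y, χ y = I⁻¹ * ((∫ t in (0:ℝ)..(y + c), χ t) - ∫ t in (0:ℝ)..y, χ t) := by
    intro y
    rw [intervalIntegral.integral_interval_sub_left (hc.intervalIntegrable _ _)
      (hc.intervalIntegrable _ _)]
    have : (∫ t in y..(y + c), χ t) = χ y * I := by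
      rw [hI, ← intervalIntegral.integral_const_mul]
      simp_rw [← hadd]
      rw [intervalIntegral.integral_comp_add_left (fun t => χ t)]
      simp
    rw [this]; field_simp
  set a := I⁻¹ * (χ c - 1) with ha
  have hχ : ∀ y, HasDerivAt χ (a * χ y) y := by
    intro y
    have h1 := (((hder (y + c)).comp_add_const y c).sub (hder y)).const_mul (I⁻¹)
    have h3 : a * χ y = I⁻¹ * (χ (y + c) - χ y) := by rw [ha, hadd]; ring
    rw [h3]
    exact h1.congr_of_eventuallyEq (Eventually.of_forall hform)
  have hexp : ∀ y : ℝ, χ y = Complex.exp (a * y) := by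
    have hd : ∀ y : ℝ, HasDerivAt (fun y : ℝ => χ y * Complex.exp (-(a * y))) 0 y := by
      intro y
      have h1 : HasDerivAt (fun y : ℝ => Complex.exp (-(a * y)))
          (Complex.exp (-(a * y)) * (-(a * 1))) y :=
        (((Complex.ofRealCLM.hasDerivAt (x := y)).const_mul a).neg).cexp
      have := (hχ y).mul h1
      exact this.congr_deriv (by ring)
    intro y
    have h := is_const_of_deriv_eq_zero (fun y => (hd y).differentiableAt)
      (fun y => (hd y).deriv) y 0
    simp only [h0, Complex.ofReal_zero, mul_zero, neg_zero, Complex.exp_zero, mul_one] at h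
    rw [Complex.exp_neg] at h
    field_simp at h
    exact h
  -- boundedness forces the exponent to be purely imaginary
  have hre : a.re = 0 := by
    have hn : ∀ n : ℤ, Real.exp (a.re) ^ n ≤ C := by
      intro n
      have := hb n
      rw [hexp, Complex.norm_exp] at this
      rw [← Real.rpow_intCast, ← Real.exp_mul]
      simpa using this
    rcases lt_trichotomy a.re 0 with h | h | h
    · obtain ⟨n, hn'⟩ := pow_unbounded_of_one_lt C (Real.one_lt_exp_iff.2 (neg_pos.2 h))
      have := hn (-n)
      rw [zpow_neg, ← inv_zpow, ← Real.exp_neg, zpow_natCast] at this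
      linarith
    · exact h
    · obtain ⟨n, hn'⟩ := pow_unbounded_of_one_lt C (Real.one_lt_exp_iff.2 h)
      have := hn n
      rw [zpow_natCast] at this
      linarith
  refine ⟨a.im, fun y => ?_⟩
  rw [hexp]
  congr 1
  apply Complex.ext <;> simp [hre]

/-! ### Operators that are `L¹` averages of a one-parameter group of contractions -/

section Abstract

variable {E : Type*} [NormedAddCommGroup E] [NormedSpace ℂ E]

theorem integrable_smul_orbit {U : ℝ → E →L[ℂ] E} (hn : ∀ x, ‖U x‖ ≤ 1)
    (hc : ∀ f, Continuous fun y => U y f) {k : ℝ → ℂ} (hk : Integrable k) (f : E) :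
    Integrable fun y => k y • U y f := by
  have h := hk.norm.mul_const ‖f‖
  refine h.mono (hk.1.smul (hc f).aestronglyMeasurable) (Eventually.of_forall fun y => ?_)
  simp only [norm_smul, norm_mul, norm_norm]
  gcongr
  exact (U y).le_of_opNorm_le (hn y) f |>.trans_eq (one_mul _)

/-- Continuity of translation in `L¹(ℝ)`. -/
theorem tendsto_integral_norm_translate_sub {k : ℝ → ℂ} (hk : Integrable k) :
    Tendsto (fun z : ℝ => ∫ y, ‖k (y - z) - k y‖) (𝓝 0) (𝓝 0) := by
  set K : Lp ℂ 1 (volume : Measure ℝ) := hk.toL1 k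
  let g : ℝ → C(ℝ, ℝ) := fun z => ⟨fun y => y - z, by fun_prop⟩
  have hg : Continuous g := ContinuousMap.continuous_of_continuous_uncurry _ (by
    simp only [g, Function.uncurry_def, ContinuousMap.coe_mk]; fun_prop)
  have hmp : ∀ z, MeasurePreserving (g z) volume volume := fun z =>
    measurePreserving_sub_right volume z
  have hcont : Continuous fun z => Lp.compMeasurePreserving (g z) (hmp z) K :=
    (continuous_const (y := K)).compMeasurePreservingLp hg hmp (by simp)
  have h0 : Lp.compMeasurePreserving (g 0) (hmp 0) K = K := by
    apply Lp.ext
    refine (Lp.coeFn_compMeasurePreserving K (hmp 0)).trans ?_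
    filter_upwards with y
    simp [g]
  have hlim : Tendsto (fun z => ‖Lp.compMeasurePreserving (g z) (hmp z) K - K‖) (𝓝 0) (𝓝 0) := by
    have := (hcont.sub (continuous_const (y := K))).norm.tendsto 0
    simpa [h0] using this
  refine hlim.congr fun z => ?_
  rw [L1.norm_eq_integral_norm]
  apply integral_congr_ae
  have hK : (K : ℝ → ℂ) =ᵐ[volume] k := hk.coeFn_toL1
  filter_upwards [Lp.coeFn_sub (Lp.compMeasurePreserving (g z) (hmp z) K) K,
    Lp.coeFn_compMeasurePreserving K (hmp z), hK,
    (hmp z).quasiMeasurePreserving.ae_eq_comp hK] with y h1 h2 h3 h4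
  rw [h1, Pi.sub_apply, h2, h3, h4]
  rfl

variable [CompleteSpace E]

theorem orbit_translate_apply
    {U : ℝ → E →L[ℂ] E} (hadd : ∀ x y, U (x + y) = U x * U y)
    (hn : ∀ x, ‖U x‖ ≤ 1) (hc : ∀ f, Continuous fun y => U y f) {k : ℝ → ℂ} (hk : Integrable k)
    {T : E →L[ℂ] E} (hT : ∀ f, T f = ∫ y, k y • U y f)
    (z : ℝ) (f : E) : U z (T f) = ∫ y, k (y - z) • U y f := by
  rw [hT, ← ContinuousLinearMap.integral_comp_comm _ (integrable_smul_orbit hn hc hk f)]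
  rw [← integral_sub_right_eq_self (μ := volume) _ z]
  congr 1 with y
  rw [map_smul, ← mul_apply_eq_comp, ← hadd]
  simp

theorem translate_commute
    {U : ℝ → E →L[ℂ] E} (hadd : ∀ x y, U (x + y) = U x * U y)
    (hn : ∀ x, ‖U x‖ ≤ 1) (hc : ∀ f, Continuous fun y => U y f) {k : ℝ → ℂ} (hk : Integrable k)
    {T : E →L[ℂ] E} (hT : ∀ f, T f = ∫ y, k y • U y f)
    (z : ℝ) : T * U z = U z * T := by
  ext f
  simp only [mul_apply_eq_comp]
  rw [hT, hT, ← ContinuousLinearMap.integral_comp_comm _ (integrable_smul_orbit hn hc hk f)]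
  congr 1 with y
  rw [map_smul, ← mul_apply_eq_comp, ← mul_apply_eq_comp, ← hadd, ← hadd,
    add_comm]

/-- Composing with `T` upgrades the strong continuity of `U` to continuity in operator norm. -/
theorem continuous_translate_mul
    {U : ℝ → E →L[ℂ] E} (hadd : ∀ x y, U (x + y) = U x * U y)
    (hn : ∀ x, ‖U x‖ ≤ 1) (hc : ∀ f, Continuous fun y => U y f) {k : ℝ → ℂ} (hk : Integrable k)
    {T : E →L[ℂ] E} (hT : ∀ f, T f = ∫ y, k y • U y f) :
    Continuous fun z => U z * T := by
  have hbound : ∀ z, ‖U z * T - T‖ ≤ ∫ y, ‖k (y - z) - k y‖ := by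
    intro z
    have h_int : Integrable fun y => k (y - z) - k y := (hk.comp_sub_right z).sub hk
    refine ContinuousLinearMap.opNorm_le_bound _ (integral_nonneg fun _ => norm_nonneg _) fun f => ?_
    have : (U z * T - T) f = ∫ y, (k (y - z) - k y) • U y f := by
      simp only [sub_apply, mul_apply_eq_comp]
      rw [orbit_translate_apply hadd hn hc hk hT, hT, ← integral_sub
        (integrable_smul_orbit hn hc (hk.comp_sub_right z) f) (integrable_smul_orbit hn hc hk f)]
      simp_rw [sub_smul]
    rw [this, ← integral_mul_const]
    refine norm_integral_le_of_norm_le (h_int.norm.mul_const _) (Eventually.of_forall fun y => ?_)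
    rw [norm_smul]
    gcongr
    exact (U y).le_of_opNorm_le (hn y) f |>.trans_eq (one_mul _)
  have hz : Tendsto (fun z => U z * T - T) (𝓝 0) (𝓝 0) :=
    squeeze_zero_norm hbound (tendsto_integral_norm_translate_sub hk)
  rw [continuous_iff_continuousAt]
  intro w
  rw [ContinuousAt, tendsto_iff_norm_sub_tendsto_zero]
  have hw : Tendsto (fun z => ‖U (z - w) * T - T‖) (𝓝 w) (𝓝 0) := by
    have h1 : Tendsto (fun z : ℝ => z - w) (𝓝 w) (𝓝 0) := by
      have : Continuous fun z : ℝ => z - w := by fun_prop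
      simpa using this.tendsto w
    simpa using (hz.comp h1).norm
  refine squeeze_zero (fun _ => norm_nonneg _) (fun z => ?_) hw
  have : U z * T - U w * T = U w * (U (z - w) * T - T) := by
    rw [mul_sub, ← mul_assoc, ← hadd]; simp
  rw [this]
  exact (norm_mul_le _ _).trans (mul_le_of_le_one_left (norm_nonneg _) (hn w))

/-- The strong integral `T = ∫ k(y) U_y dy` becomes a Bochner integral in operator norm after
multiplication by `T`. -/
theorem sq_eq_integral
    {U : ℝ → E →L[ℂ] E} (hadd : ∀ x y, U (x + y) = U x * U y)
    (hn : ∀ x, ‖U x‖ ≤ 1) (hc : ∀ f, Continuous fun y => U y f) {k : ℝ → ℂ} (hk : Integrable k)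
    {T : E →L[ℂ] E} (hT : ∀ f, T f = ∫ y, k y • U y f) :
    Integrable (fun y => k y • (U y * T)) ∧ T * T = ∫ y, k y • (U y * T) := by
  have hcont := continuous_translate_mul hadd hn hc hk hT
  have h_int : Integrable (fun y => k y • (U y * T)) := by
    refine (hk.norm.mul_const ‖T‖).mono (hk.1.smul hcont.aestronglyMeasurable)
      (Eventually.of_forall fun y => ?_)
    simp only [norm_smul, norm_mul, norm_norm]
    gcongr
    exact (norm_mul_le _ _).trans (mul_le_of_le_one_left (norm_nonneg _) (hn y))
  refine ⟨h_int, ?_⟩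
  ext f
  rw [ContinuousLinearMap.integral_apply h_int, mul_apply_eq_comp, hT (T f)]
  rfl

/-- A nonzero spectral value of `T = ∫ k(y) U_y dy` is a value of the Fourier transform of `k`:
by Gelfand theory it is `φ(T)` for a character `φ` of a closed commutative algebra containing `T`
and every `U_y`, and `φ` restricted to the group `U` is a unitary character of `ℝ`. -/
theorem eq_zero_or_fourier_of_mem_spectrum
    {U : ℝ → E →L[ℂ] E} (hadd : ∀ x y, U (x + y) = U x * U y)
    (hn : ∀ x, ‖U x‖ ≤ 1) (hc : ∀ f, Continuous fun y => U y f) {k : ℝ → ℂ} (hk : Integrable k)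
    {T : E →L[ℂ] E} (hT : ∀ f, T f = ∫ y, k y • U y f)
    (h0 : U 0 = 1) {l : ℂ} (hl : l ∈ spectrum ℂ T) :
    l = 0 ∨ ∃ τ : ℝ, l = ∫ y, k y * Complex.exp (τ * y * Complex.I) := by
  have hcomm := translate_commute hadd hn hc hk hT
  have hcont := continuous_translate_mul hadd hn hc hk hT
  obtain ⟨h_int, hsq⟩ := sq_eq_integral hadd hn hc hk hT
  set s : Set (E →L[ℂ] E) := insert T (range U) with hs
  have hss : s ⊆ Set.centralizer s := by
    rintro a ha b hb
    rcases ha with rfl | ⟨x, rfl⟩ <;> rcases hb with rfl | ⟨y, rfl⟩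
    · rfl
    · exact (hcomm y).symm
    · exact hcomm x
    · rw [← hadd, ← hadd, add_comm]
  -- the bicommutant of a commuting set is commutative and closed
  let A : Subalgebra ℂ (E →L[ℂ] E) := Subalgebra.centralizer ℂ (Set.centralizer s)
  have hA : ∀ a ∈ A, ∀ b ∈ A, a * b = b * a := by
    intro a ha b hb
    have ha' : a ∈ Set.centralizer (Set.centralizer s) := ha
    have hb' : b ∈ Set.centralizer (Set.centralizer s) := hb
    have : b ∈ Set.centralizer s := by
      have := Set.centralizer_subset hss hb'
      exact this
    exact (ha' b this).symm
  have hsA : s ⊆ A := Set.subset_centralizer_centralizer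
  have hAcl : IsClosed (A : Set (E →L[ℂ] E)) := Set.isClosed_centralizer _
  let _ : NormedCommRing A := { (inferInstance : NormedRing A) with
    mul_comm := fun a b => Subtype.ext (hA a a.2 b b.2) }
  let _ : NormedAlgebra ℂ A := Subalgebra.toNormedAlgebra A
  have : CompleteSpace A := hAcl.completeSpace_coe
  let t : A := ⟨T, hsA (mem_insert _ _)⟩
  let u : ℝ → A := fun y => ⟨U y, hsA (mem_insert_of_mem _ ⟨y, rfl⟩)⟩
  have hlA : l ∈ spectrum ℂ t := AlgHom.spectrum_apply_subset A.val t hl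
  obtain ⟨φ, hφ⟩ := WeakDual.CharacterSpace.mem_spectrum_iff_exists.1 hlA
  by_cases hl0 : l = 0
  · exact Or.inl hl0
  right
  have hucont : Continuous fun y => u y * t := by
    rw [continuous_induced_rng]; exact hcont
  have huint : Integrable fun y => k y • (u y * t) := by
    have : SecondCountableTopologyEither ℝ A := secondCountableTopologyEither_of_left ℝ A
    have hm : AEStronglyMeasurable fun y => k y • (u y * t) :=
      hk.1.smul hucont.aestronglyMeasurable
    exact h_int.mono hm (Eventually.of_forall fun y => le_rfl)
  have hsqA : t * t = ∫ y, k y • (u y * t) := by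
    apply Subtype.ext
    have := (A.val.toLinearMap.mkContinuous 1 (fun x => (one_mul ‖x‖).ge)).integral_comp_comm huint
    exact hsq.trans this
  have hφcont : Continuous φ := map_continuous φ
  let χ : ℝ → ℂ := fun y => φ (u y)
  have hχeq : ∀ y, χ y = φ (u y * t) / l := by
    intro y
    rw [map_mul, hφ]; field_simp; rfl
  obtain ⟨τ, hτ⟩ := exists_exp_of_bounded_character χ
    (by
      have : u 0 = 1 := Subtype.ext h0
      simp only [χ, this, map_one])
    (fun x y => by
      have : u (x + y) = u x * u y := Subtype.ext (hadd x y)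
      simp only [χ, this, map_mul])
    (by
      have : χ = fun y => φ (u y * t) / l := funext hχeq
      rw [this]
      exact (hφcont.comp hucont).div_const l)
    ‖(1 : A)‖ (fun x => by
      refine (AlgHom.norm_apply_le_self_mul_norm_one φ (u x)).trans ?_
      exact mul_le_of_le_one_left (norm_nonneg _) (hn x))
  refine ⟨τ, ?_⟩
  have h1 : l * l = (∫ y, k y * Complex.exp (τ * y * Complex.I)) * l := by
    have := congrArg φ hsqA
    rw [map_mul, hφ] at this
    rw [this, ← integral_mul_const]
    have h2 := (WeakDual.CharacterSpace.toCLM φ).integral_comp_comm huint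
    refine Eq.trans h2.symm ?_
    congr 1 with y
    rw [← hτ]
    simp only [χ, WeakDual.CharacterSpace.coe_toCLM, map_smul, map_mul, hφ, smul_eq_mul, mul_assoc]
  exact mul_right_cancel₀ hl0 h1

/-- If the group `U` has approximate common eigenvectors `F n` for the character `e^{iτy}`, then
`T F n - l F n = ∫ k(y) (U_y F n - e^{iτy} F n) dy`, with `l = ∫ k(y) e^{iτy} dy`, is small
relative to `F n` by dominated convergence, so `l - T` is not invertible. -/
theorem fourier_mem_spectrum
    {U : ℝ → E →L[ℂ] E}
    (hn : ∀ x, ‖U x‖ ≤ 1) (hc : ∀ f, Continuous fun y => U y f) {k : ℝ → ℂ} (hk : Integrable k)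
    {T : E →L[ℂ] E} (hT : ∀ f, T f = ∫ y, k y • U y f)
    (τ : ℝ) (F : ℕ → E) (hF : ∀ n, F n ≠ 0)
    (hlim : ∀ y : ℝ, Tendsto (fun n => ‖U y (F n) - Complex.exp (τ * y * Complex.I) • F n‖ / ‖F n‖)
      atTop (𝓝 0)) :
    (∫ y, k y * Complex.exp (τ * y * Complex.I)) ∈ spectrum ℂ T := by
  set l := ∫ y, k y * Complex.exp (τ * y * Complex.I) with hl
  intro hunit
  obtain ⟨V, hV⟩ := hunit.exists_left_inv
  have hexpn : ∀ y : ℝ, ‖Complex.exp (τ * y * Complex.I)‖ = 1 := fun y => by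
    exact_mod_cast Complex.norm_exp_ofReal_mul_I (τ * y)
  have hle : ∀ n, 1 ≤ ‖V‖ * ∫ y, ‖k y‖ *
      (‖U y (F n) - Complex.exp (τ * y * Complex.I) • F n‖ / ‖F n‖) := by
    intro n
    have hpos := norm_pos_iff.2 (hF n)
    have hfn : Integrable fun y => k y * Complex.exp (τ * y * Complex.I) :=
      (hk.norm).mono (hk.1.mul (Continuous.aestronglyMeasurable (by fun_prop)))
        (Eventually.of_forall fun y => by rw [norm_mul, hexpn, mul_one, norm_norm])
    have h1 : (algebraMap ℂ (E →L[ℂ] E) l - T) (F n) =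
        ∫ y, k y • (Complex.exp (τ * y * Complex.I) • F n - U y (F n)) := by
      rw [sub_apply, hT, ContinuousLinearMap.algebraMap_apply, hl, ← integral_smul_const,
        ← integral_sub (hfn.smul_const _) (integrable_smul_orbit hn hc hk _)]
      congr 1 with y
      rw [smul_sub, smul_smul]
    have h2 : F n = V ((algebraMap ℂ (E →L[ℂ] E) l - T) (F n)) := by
      rw [← mul_apply_eq_comp, hV]; rfl
    have h3 : ‖F n‖ ≤ ‖V‖ * ∫ y, ‖k y‖ * ‖U y (F n) - Complex.exp (τ * y * Complex.I) • F n‖ := by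
      conv_lhs => rw [h2]
      refine (V.le_opNorm _).trans ?_
      gcongr
      rw [h1]
      refine (norm_integral_le_integral_norm _).trans_eq ?_
      congr 1 with y
      rw [norm_smul, norm_sub_rev]
    simp_rw [← mul_div_assoc, integral_div]
    rw [← mul_div_assoc, le_div_iff₀ hpos, one_mul]
    exact h3
  have htend : Tendsto (fun n => ∫ y, ‖k y‖ *
      (‖U y (F n) - Complex.exp (τ * y * Complex.I) • F n‖ / ‖F n‖)) atTop (𝓝 0) := by
    have : (0:ℝ) = ∫ y : ℝ, (0:ℝ) := by simp
    rw [this]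
    refine tendsto_integral_of_dominated_convergence (fun y => ‖k y‖ * 2) ?_ (hk.norm.mul_const 2)
      ?_ ?_
    · intro n
      refine hk.1.norm.mul (Continuous.aestronglyMeasurable ?_)
      have := hc (F n)
      fun_prop
    · intro n
      refine Eventually.of_forall fun y => ?_
      rw [norm_mul, norm_norm, norm_div, norm_norm, norm_norm]
      gcongr
      rw [div_le_iff₀ (norm_pos_iff.2 (hF n))]
      refine (norm_sub_le _ _).trans ?_
      rw [norm_smul, hexpn]
      have := (U y).le_of_opNorm_le (hn y) (F n)
      linarith
    · refine Eventually.of_forall fun y => ?_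
      simpa using (hlim y).const_mul ‖k y‖
  have := ge_of_tendsto' (htend.const_mul ‖V‖) hle
  simp at this
  linarith

end Abstract

/-! ### Convolution operators on `L^P(ℝ)` -/

section Translation

variable {P : ENNReal} [Fact (1 ≤ P)]

/-- The translation `F ↦ F(· + y)` on `L^P(ℝ)`. -/
noncomputable def lpTranslate (P : ENNReal) [Fact (1 ≤ P)] (y : ℝ) :
    Lp ℂ P (volume : Measure ℝ) →L[ℂ] Lp ℂ P (volume : Measure ℝ) :=
  (Lp.compMeasurePreservingₗᵢ ℂ (· + y)
    (measurePreserving_add_right volume y)).toContinuousLinearMap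

theorem lpTranslate_coeFn (y : ℝ) (F : Lp ℂ P (volume : Measure ℝ)) :
    (lpTranslate P y F : ℝ → ℂ) =ᵐ[volume] fun x => F (x + y) :=
  Lp.coeFn_compMeasurePreserving F (measurePreserving_add_right volume y)

theorem lpTranslate_norm_apply (y : ℝ) (F : Lp ℂ P (volume : Measure ℝ)) :
    ‖lpTranslate P y F‖ = ‖F‖ :=
  LinearIsometry.norm_map _ F

theorem lpTranslate_norm_le (y : ℝ) : ‖lpTranslate P y‖ ≤ 1 :=
  LinearIsometry.norm_toContinuousLinearMap_le _

theorem lpTranslate_zero : lpTranslate P 0 = 1 := by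
  ext1 F
  apply Lp.ext
  filter_upwards [lpTranslate_coeFn 0 F] with x hx
  rw [hx, add_zero]; rfl

theorem lpTranslate_add (x y : ℝ) :
    lpTranslate P (x + y) = lpTranslate P x * lpTranslate P y := by
  ext1 F
  apply Lp.ext
  filter_upwards [lpTranslate_coeFn (x + y) F, lpTranslate_coeFn x (lpTranslate P y F),
    (measurePreserving_add_right volume x).quasiMeasurePreserving.ae_eq_comp
      (lpTranslate_coeFn y F)] with t h1 h2 h3
  rw [h1, mul_apply_eq_comp, h2]
  simp only [Function.comp_apply] at h3
  rw [h3, add_assoc]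

theorem lpTranslate_continuous (hP : P ≠ ⊤) (F : Lp ℂ P (volume : Measure ℝ)) :
    Continuous fun y => lpTranslate P y F := by
  let g : ℝ → C(ℝ, ℝ) := fun z => ⟨fun y => y + z, by fun_prop⟩
  have hg : Continuous g := ContinuousMap.continuous_of_continuous_uncurry _ (by
    simp only [g, Function.uncurry_def, ContinuousMap.coe_mk]; fun_prop)
  exact (continuous_const (y := F)).compMeasurePreservingLp hg
    (fun z => measurePreserving_add_right volume z) hP

/-- On a set of finite measure the `L¹` norm is controlled by the `L^P` norm. -/
theorem exists_setIntegral_norm_le (s : Set ℝ) (hs : volume s < ⊤) :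
    ∃ C : ℝ, ∀ F : Lp ℂ P (volume : Measure ℝ),
      IntegrableOn F s ∧ ∫ x in s, ‖F x‖ ≤ C * ‖F‖ := by
  have : IsFiniteMeasure (volume.restrict s) := ⟨by simpa using hs⟩
  set M := volume.restrict s univ ^ (1 / (1 : ENNReal).toReal - 1 / P.toReal)
  refine ⟨M.toReal, fun F => ?_⟩
  have hmem : MemLp F P (volume.restrict s) := (Lp.memLp F).restrict s
  have h_int : IntegrableOn F s := hmem.integrable Fact.out
  refine ⟨h_int, ?_⟩
  have h1 := eLpNorm_le_eLpNorm_mul_rpow_measure_univ (μ := volume.restrict s)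
    (Fact.out : (1 : ENNReal) ≤ P) hmem.1
  have hM : M ≠ ⊤ := by
    refine ENNReal.rpow_ne_top_of_nonneg ?_ (measure_ne_top _ _)
    rcases eq_or_ne P ⊤ with rfl | hP
    · simp
    · have : 1 ≤ P.toReal := by
        rw [← ENNReal.toReal_one]
        exact (ENNReal.toReal_le_toReal ENNReal.one_ne_top hP).2 Fact.out
      rw [ENNReal.toReal_one, sub_nonneg]
      gcongr
  have h2 : eLpNorm F 1 (volume.restrict s) ≤ eLpNorm F P volume * M :=
    h1.trans (by gcongr; exact Measure.restrict_le_self)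
  have h3 := ENNReal.toReal_mono (ENNReal.mul_ne_top (Lp.eLpNorm_ne_top F) hM) h2
  rw [ENNReal.toReal_mul, ← Lp.norm_def, mul_comm] at h3
  refine le_trans (le_of_eq ?_) h3
  rw [eLpNorm_one_eq_lintegral_enorm, integral_norm_eq_lintegral_enorm h_int.1]

/-- Identification of the pointwise convolution with the `L^P`-valued Bochner integral. -/
theorem eq_integral_lpTranslate (hP : P ≠ ⊤) {k : ℝ → ℂ} (hk : Integrable k)
    (F G : Lp ℂ P (volume : Measure ℝ))
    (hG : (G : ℝ → ℂ) =ᵐ[volume] fun x => ∫ y, k y * F (x + y)) :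
    G = ∫ y, k y • lpTranslate P y F := by
  have h_int := integrable_smul_orbit lpTranslate_norm_le (lpTranslate_continuous hP) hk F
  have hP0 : P ≠ 0 := (zero_lt_one.trans_le (Fact.out : 1 ≤ P)).ne'
  apply Lp.ext
  refine Lp.ae_eq_of_forall_setIntegral_eq _ _ hP0 hP ?_ ?_ ?_
  · intro s _ hs
    obtain ⟨C, hC⟩ := exists_setIntegral_norm_le (P := P) s hs
    exact (hC _).1
  · intro s _ hs
    obtain ⟨C, hC⟩ := exists_setIntegral_norm_le (P := P) s hs
    exact (hC _).1
  intro s hsm hs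
  obtain ⟨C, hC⟩ := exists_setIntegral_norm_le (P := P) s hs
  let L : Lp ℂ P (volume : Measure ℝ) →L[ℂ] ℂ := LinearMap.mkContinuous
    { toFun := fun H => ∫ x in s, H x
      map_add' := fun H K => by
        rw [← integral_add (hC H).1 (hC K).1]
        exact integral_congr_ae (ae_restrict_of_ae (Lp.coeFn_add H K))
      map_smul' := fun c H => by
        rw [RingHom.id_apply, ← integral_smul]
        exact integral_congr_ae (ae_restrict_of_ae (Lp.coeFn_smul c H)) }
    C (fun H => (norm_integral_le_integral_norm _).trans (hC H).2)
  have hL : ∀ H, L H = ∫ x in s, H x := fun _ => rfl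
  have hslice : ∀ y, Integrable (fun x => F (x + y)) (volume.restrict s) := fun y =>
    (hC (lpTranslate P y F)).1.congr (ae_restrict_of_ae (lpTranslate_coeFn y F))
  have hslice_le : ∀ y, ∫ x in s, ‖F (x + y)‖ ≤ C * ‖F‖ := fun y => by
    have h := (hC (lpTranslate P y F)).2
    rw [lpTranslate_norm_apply] at h
    refine le_trans (le_of_eq ?_) h
    refine integral_congr_ae (ae_restrict_of_ae ?_)
    filter_upwards [lpTranslate_coeFn y F] with x hx
    rw [hx]
  have hmeas : AEStronglyMeasurable (fun z : ℝ × ℝ => k z.2 * F (z.1 + z.2))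
      ((volume.restrict s).prod volume) :=
    hk.1.comp_snd.mul
      ((Lp.stronglyMeasurable F).comp_measurable (measurable_fst.add measurable_snd)
        ).aestronglyMeasurable
  have hprod : Integrable (fun z : ℝ × ℝ => k z.2 * F (z.1 + z.2))
      ((volume.restrict s).prod volume) := by
    rw [integrable_prod_iff' hmeas]
    refine ⟨Eventually.of_forall fun y => (hslice y).const_mul (k y), ?_⟩
    refine (hk.norm.mul_const (C * ‖F‖)).mono' hmeas.norm.prod_swap.integral_prod_right' ?_
    refine Eventually.of_forall fun y => ?_
    rw [Real.norm_of_nonneg (integral_nonneg fun _ => norm_nonneg _)]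
    simp_rw [norm_mul, integral_const_mul]
    gcongr
    exact hslice_le y
  rw [← hL, ← hL, ← L.integral_comp_comm h_int]
  rw [hL, integral_congr_ae (ae_restrict_of_ae hG), integral_integral_swap hprod]
  congr 1 with y
  rw [map_smul, hL, integral_const_mul, smul_eq_mul]
  congr 1
  exact (integral_congr_ae (ae_restrict_of_ae (lpTranslate_coeFn y F))).symm

/-- The witnesses are `e^{iτx} 1_{(0,n+1]}(x)`: their norm is `(n+1)^{1/P}`, while translation by
`y` changes them, up to the factor `e^{iτy}`, only within distance `|y|` of the two endpoints. -/
theorem exists_approx_eigenvectors (hP : P ≠ ⊤) (τ : ℝ) :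
    ∃ F : ℕ → Lp ℂ P (volume : Measure ℝ), (∀ n, F n ≠ 0) ∧ ∀ y : ℝ, Tendsto (fun n =>
      ‖lpTranslate P y (F n) - Complex.exp (τ * y * Complex.I) • F n‖ / ‖F n‖) atTop (𝓝 0) := by
  have hP0 : P ≠ 0 := (zero_lt_one.trans_le (Fact.out : 1 ≤ P)).ne'
  have hexpn : ∀ y : ℝ, ‖Complex.exp (τ * y * Complex.I)‖ = 1 := fun y => by
    exact_mod_cast Complex.norm_exp_ofReal_mul_I (τ * y)
  let J : ℕ → Set ℝ := fun n => Ioc 0 ((n : ℝ) + 1)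
  let f : ℕ → ℝ → ℂ := fun n => (J n).indicator fun x => Complex.exp (τ * x * Complex.I)
  have hnorm : ∀ n x, ‖f n x‖ = ‖(J n).indicator (fun _ => (1 : ℂ)) x‖ := by
    intro n x
    simp only [f, norm_indicator_eq_indicator_norm, hexpn, norm_one]
  have hfm : ∀ n, AEStronglyMeasurable (f n) := fun n =>
    (Continuous.aestronglyMeasurable (by fun_prop)).indicator measurableSet_Ioc
  have hfe : ∀ n, eLpNorm (f n) P volume = ENNReal.ofReal (n + 1) ^ (1 / P.toReal) := by
    intro n
    rw [eLpNorm_congr_norm_ae (Eventually.of_forall (hnorm n)),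
      eLpNorm_indicator_const measurableSet_Ioc hP0 hP]
    simp
  have hfp : ∀ n, MemLp (f n) P volume := fun n => ⟨hfm n, by
    rw [hfe]
    exact ENNReal.rpow_lt_top_of_nonneg (by positivity) ENNReal.ofReal_ne_top⟩
  have hPpos : 0 < 1 / P.toReal := by
    have := ENNReal.toReal_pos hP0 hP
    positivity
  let F : ℕ → Lp ℂ P (volume : Measure ℝ) := fun n => (hfp n).toLp (f n)
  have hFn : ∀ n, ‖F n‖ = ((n : ℝ) + 1) ^ (1 / P.toReal) := by
    intro n
    rw [Lp.norm_toLp, hfe, ← ENNReal.toReal_rpow, ENNReal.toReal_ofReal (by positivity)]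
  refine ⟨F, fun n => ?_, fun y => ?_⟩
  · rw [← norm_pos_iff, hFn]; positivity
  have hb : ∀ n, ‖lpTranslate P y (F n) - Complex.exp (τ * y * Complex.I) • F n‖ ≤
      (ENNReal.ofReal (4 * |y|) ^ (1 / P.toReal)).toReal := by
    intro n
    let S : Set ℝ := Icc (-|y|) |y| ∪ Icc ((n + 1) - |y|) ((n + 1) + |y|)
    have hS : MeasurableSet S := measurableSet_Icc.union measurableSet_Icc
    have hSm : volume S ≤ ENNReal.ofReal (4 * |y|) := by
      refine (measure_union_le _ _).trans ?_
      rw [Real.volume_Icc, Real.volume_Icc, ← ENNReal.ofReal_add (by simp) (by simp)]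
      apply ENNReal.ofReal_le_ofReal
      linarith
    rw [Lp.norm_def]
    refine ENNReal.toReal_mono
      (ENNReal.rpow_ne_top_of_nonneg hPpos.le ENNReal.ofReal_ne_top) ?_
    calc _ ≤ eLpNorm (S.indicator fun _ => (1 : ℂ)) P volume := by
          apply eLpNorm_mono_ae
          filter_upwards [Lp.coeFn_sub (lpTranslate P y (F n))
            (Complex.exp (τ * y * Complex.I) • F n), lpTranslate_coeFn y (F n),
            Lp.coeFn_smul (Complex.exp (τ * y * Complex.I)) (F n), (hfp n).coeFn_toLp,
            (measurePreserving_add_right volume y).quasiMeasurePreserving.ae_eq_comp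
              (hfp n).coeFn_toLp] with x h1 h2 h3 h4 h5
          simp only [Function.comp_apply] at h5
          rw [h1, Pi.sub_apply, h2, h3, Pi.smul_apply]
          simp only [F]
          rw [h4, h5]
          have hexp : Complex.exp (τ * (x + y : ℝ) * Complex.I) =
            Complex.exp (τ * y * Complex.I) * Complex.exp (τ * x * Complex.I) := by
            rw [← Complex.exp_add]; push_cast; ring_nf
          have hy1 := neg_abs_le y
          have hy2 := le_abs_self y
          simp only [f, J, indicator_apply, smul_eq_mul, hexp, mem_Ioc]
          by_cases a : 0 < x + y ∧ x + y ≤ (n : ℝ) + 1 <;>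
          by_cases b : 0 < x ∧ x ≤ (n : ℝ) + 1
          · simp [a, b]
          · have : x ∈ S := by
              simp only [S, mem_union, mem_Icc]
              by_contra! hcon
              apply b
              constructor
              · by_contra! h
                have := hcon.1 (by linarith)
                linarith
              · by_contra! h
                have := hcon.2 (by linarith)
                linarith
            rw [if_pos a, if_neg b, if_pos this]
            simp only [mul_zero, sub_zero, norm_mul, hexpn, norm_one, mul_one, le_refl]
          · have : x ∈ S := by
              simp only [S, mem_union, mem_Icc]
              by_contra! hcon
              apply a
              constructor
              · by_contra! h
                have := hcon.1 (by linarith)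
                linarith
              · by_contra! h
                have := hcon.2 (by linarith)
                linarith
            rw [if_neg a, if_pos b, if_pos this]
            simp only [zero_sub, norm_neg, norm_mul, hexpn, norm_one, mul_one, le_refl]
          · simp only [if_neg a, if_neg b, mul_zero, sub_zero, norm_zero, norm_nonneg]
      _ ≤ _ := by
          rw [eLpNorm_indicator_const hS hP0 hP]
          simp only [enorm_one, one_mul]
          gcongr
  refine squeeze_zero (fun n => by positivity)
    (fun n => div_le_div_of_nonneg_right (hb n) (norm_nonneg _)) ?_
  simp_rw [hFn]
  refine Tendsto.const_div_atTop ?_ _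
  exact (tendsto_rpow_atTop hPpos).comp
    (tendsto_atTop_add_const_right _ _ tendsto_natCast_atTop_atTop)

/-- The spectrum of convolution by `k ∈ L¹(ℝ)` on `L^P(ℝ)`, `P < ∞`, is the closure of the range of
the Fourier transform of `k`. -/
theorem spectrum_convolution (hP : P ≠ ⊤) {k : ℝ → ℂ} (hk : Integrable k)
    (S : Lp ℂ P (volume : Measure ℝ) →L[ℂ] Lp ℂ P (volume : Measure ℝ))
    (hS : ∀ F : Lp ℂ P (volume : Measure ℝ),
      (S F : ℝ → ℂ) =ᵐ[volume] fun x => ∫ y, k y * F (x + y)) :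
    spectrum ℂ S = closure (range fun τ : ℝ => ∫ y, k y * Complex.exp (τ * y * Complex.I)) := by
  have hS' : ∀ F, S F = ∫ y, k y • lpTranslate P y F := fun F =>
    eq_integral_lpTranslate hP hk F _ (hS F)
  apply Subset.antisymm
  · intro l hl
    rcases eq_zero_or_fourier_of_mem_spectrum lpTranslate_add lpTranslate_norm_le
      (lpTranslate_continuous hP) hk hS' lpTranslate_zero hl with rfl | ⟨τ, rfl⟩
    · have hRL := Real.zero_at_infty_fourier k
      have h1 : Tendsto (fun n : ℕ => (n : ℝ)) atTop (cocompact ℝ) :=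
        tendsto_natCast_atTop_atTop.mono_right atTop_le_cocompact
      refine mem_closure_of_tendsto (hRL.comp h1) (Eventually.of_forall fun n => ?_)
      refine ⟨-2 * Real.pi * n, ?_⟩
      simp only [Function.comp_apply]
      rw [Real.fourier_real_eq_integral_exp_smul]
      congr 1 with y
      rw [smul_eq_mul, mul_comm]
      congr 2
      push_cast
      ring
    · exact subset_closure ⟨τ, rfl⟩
  · refine closure_minimal ?_ (spectrum.isClosed S)
    rintro _ ⟨τ, rfl⟩
    obtain ⟨F, hF0, hF⟩ := exists_approx_eigenvectors (P := P) hP τ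
    exact fourier_mem_spectrum lpTranslate_norm_le (lpTranslate_continuous hP) hk hS' τ F hF0 hF

end Translation

/-! ### The convolution kernel and its Fourier transform -/

section Kernel

theorem image_exp_neg_Ioi : Set.image (fun y : ℝ => Real.exp (-y)) (Ioi 0) = Ioo 0 1 := by
  ext u
  constructor
  · rintro ⟨y, hy, rfl⟩
    exact ⟨Real.exp_pos _, Real.exp_lt_one_iff.2 (neg_lt_zero.2 hy)⟩
  · rintro ⟨h0, h1⟩
    refine ⟨-Real.log u, neg_pos.2 (Real.log_neg h0 h1), ?_⟩
    simp [Real.exp_log h0]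

/-- The substitution `u = e^{-y}` turns the Beta integral into a Laplace transform. -/
theorem beta_laplace (β : ℝ) (hβ : 0 < β) (z : ℂ) (hz : 0 < z.re) :
    IntegrableOn (fun y : ℝ => (((1 - Real.exp (-y)) ^ (β - 1) : ℝ) : ℂ) * Complex.exp (-z * y))
      (Ioi 0) ∧
    ∫ y in Ioi (0 : ℝ), (((1 - Real.exp (-y)) ^ (β - 1) : ℝ) : ℂ) * Complex.exp (-z * y) =
      Complex.betaIntegral z β := by
  let g : ℝ → ℂ := fun x => (x : ℂ) ^ (z - 1) * (1 - (x : ℂ)) ^ ((β : ℂ) - 1)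
  have hder : ∀ y ∈ Ioi (0 : ℝ), HasDerivWithinAt (fun y : ℝ => Real.exp (-y)) (-Real.exp (-y))
      (Ioi 0) y := fun y _ => by
    have := ((hasDerivAt_id y).neg.exp).hasDerivWithinAt (s := Ioi 0)
    simpa using this
  have hinj : InjOn (fun y : ℝ => Real.exp (-y)) (Ioi 0) := fun a _ b _ h => by
    simpa using h
  have hcongr : ∀ y ∈ Ioi (0 : ℝ), |-Real.exp (-y)| • g (Real.exp (-y)) =
      (((1 - Real.exp (-y)) ^ (β - 1) : ℝ) : ℂ) * Complex.exp (-z * y) := by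
    intro y hy
    have h1 : 0 < 1 - Real.exp (-y) := sub_pos.2 (Real.exp_lt_one_iff.2 (neg_lt_zero.2 hy))
    have h2 : ((Real.exp (-y) : ℝ) : ℂ) ^ (z - 1) = Complex.exp (-y * (z - 1)) := by
      rw [Complex.cpow_def_of_ne_zero (by exact_mod_cast (Real.exp_pos _).ne'),
        ← Complex.ofReal_log (Real.exp_pos _).le, Real.log_exp]
      push_cast; rfl
    simp only [g]
    rw [h2, abs_neg, abs_of_pos (Real.exp_pos _), Complex.real_smul,
      Complex.ofReal_cpow h1.le]
    push_cast
    rw [← mul_assoc, ← Complex.exp_add, mul_comm]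
    congr 2
    ring
  have hg : IntegrableOn g (Ioo 0 1) := by
    have := Complex.betaIntegral_convergent hz (v := (β : ℂ)) (by simpa using hβ)
    rw [intervalIntegrable_iff_integrableOn_Ioo_of_le zero_le_one] at this
    exact this
  constructor
  · rw [← image_exp_neg_Ioi,
      integrableOn_image_iff_integrableOn_abs_deriv_smul measurableSet_Ioi hder hinj] at hg
    exact hg.congr_fun hcongr measurableSet_Ioi
  · rw [← setIntegral_congr_fun measurableSet_Ioi hcongr,
      ← integral_image_eq_integral_abs_deriv_smul measurableSet_Ioi hder hinj, image_exp_neg_Ioi,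
      Complex.betaIntegral, intervalIntegral.integral_of_le zero_le_one,
      integral_Ioc_eq_integral_Ioo]

/-- The convolution kernel `β (1 - e^{-y})^{β-1} e^{-y/p}` for `y > 0`, and `0` for `y ≤ 0`, of the
operator in logarithmic coordinates. -/
noncomputable def cesaroKernel (p β : ℝ) : ℝ → ℂ :=
  (Ioi (0 : ℝ)).indicator fun y =>
    (β : ℂ) * ((((1 - Real.exp (-y)) ^ (β - 1) : ℝ) : ℂ) * Complex.exp (-(1 / (p : ℂ)) * y))

theorem inv_re_pos {p : ℝ} (hp : 0 < p) (τ : ℝ) : 0 < (1 / (p : ℂ) + τ * Complex.I).re := by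
  have : (1 / (p : ℂ)) = ((1 / p : ℝ) : ℂ) := by push_cast; rfl
  rw [this]
  simpa using hp

theorem integrable_cesaroKernel {p β : ℝ} (hp : 0 < p) (hβ : 0 < β) :
    Integrable (cesaroKernel p β) := by
  rw [cesaroKernel, integrable_indicator_iff measurableSet_Ioi]
  refine Integrable.const_mul (beta_laplace β hβ (1 / (p : ℂ)) ?_).1 _
  simpa using inv_re_pos hp 0

theorem fourier_cesaroKernel {p β : ℝ} (hp : 0 < p) (hβ : 0 < β) (τ : ℝ) :
    ∫ y, cesaroKernel p β y * Complex.exp (((-τ : ℝ) : ℂ) * y * Complex.I) =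
      (Real.Gamma (β + 1) : ℂ) * (Complex.Gamma (1 / (p : ℂ) + τ * Complex.I) /
              Complex.Gamma ((β : ℂ) + 1 / (p : ℂ) + τ * Complex.I)) := by
  set z : ℂ := 1 / (p : ℂ) + τ * Complex.I with hz
  have hzre : 0 < z.re := inv_re_pos hp τ
  have hβre : 0 < (β : ℂ).re := by simpa using hβ
  have h1 : ∫ y, cesaroKernel p β y * Complex.exp (((-τ : ℝ) : ℂ) * y * Complex.I) =
      β * Complex.betaIntegral z β := by
    rw [← (beta_laplace β hβ z hzre).2, ← integral_const_mul, ← integral_indicator measurableSet_Ioi]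
    congr 1 with y
    by_cases hy : y ∈ Ioi (0 : ℝ)
    · simp only [cesaroKernel, indicator_of_mem hy]
      rw [mul_assoc, mul_assoc, ← Complex.exp_add]
      congr 3
      rw [hz]; push_cast; ring
    · simp only [cesaroKernel, indicator_of_notMem hy, zero_mul]
  have hne : Complex.Gamma (z + β) ≠ 0 :=
    Complex.Gamma_ne_zero_of_re_pos (by rw [Complex.add_re]; positivity)
  have h2 := Complex.Gamma_mul_Gamma_eq_betaIntegral hzre hβre
  rw [h1, ← Complex.Gamma_ofReal, Complex.ofReal_add, Complex.ofReal_one,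
    Complex.Gamma_add_one _ (by exact_mod_cast hβ.ne'), add_assoc, ← hz, add_comm (β : ℂ) z]
  field_simp
  rw [mul_assoc, mul_comm (Complex.betaIntegral _ _), ← h2]
  ring

end Kernel

/-! ### Logarithmic coordinates -/

section LogCoordinates

theorem range_image_exp : Set.image Real.exp univ = Ioi 0 := by
  rw [image_univ, Real.range_exp]

theorem exp_quasiMeasurePreserving :
    Measure.QuasiMeasurePreserving Real.exp volume (volume.restrict (Ioi 0)) := by
  refine ⟨Real.measurable_exp, Measure.AbsolutelyContinuous.mk fun s hs h0 => ?_⟩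
  rw [Measure.map_apply Real.measurable_exp hs]
  have h := lintegral_image_eq_lintegral_abs_deriv_mul MeasurableSet.univ
    (fun x _ => (Real.hasDerivAt_exp x).hasDerivWithinAt) Real.exp_injective.injOn
    (s.indicator 1)
  rw [range_image_exp, lintegral_indicator_one hs, h0, eq_comm, Measure.restrict_univ,
    lintegral_eq_zero_iff (by
      refine Measurable.mul (by fun_prop) ?_
      exact (measurable_one.indicator hs).comp Real.measurable_exp)] at h
  rw [measure_eq_zero_iff_ae_notMem]
  filter_upwards [h] with x hx hxs
  have hxs' : Real.exp x ∈ s := hxs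
  simp [hxs'] at hx
  exact absurd hx (not_le.2 (Real.exp_pos x))

theorem eLpNorm_log_coordinates {p : ℝ} (hp : 0 < p) (f : ℝ → ℂ) :
    eLpNorm (fun x : ℝ => Complex.exp (x / p) * f (Real.exp x)) (ENNReal.ofReal p) volume =
      eLpNorm f (ENNReal.ofReal p) (volume.restrict (Ioi 0)) := by
  have h0 : ENNReal.ofReal p ≠ 0 := by simpa using hp
  rw [eLpNorm_eq_lintegral_rpow_enorm_toReal h0 ENNReal.ofReal_ne_top,
    eLpNorm_eq_lintegral_rpow_enorm_toReal h0 ENNReal.ofReal_ne_top, ENNReal.toReal_ofReal hp.le]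
  have h := lintegral_image_eq_lintegral_abs_deriv_mul MeasurableSet.univ
    (fun x _ => (Real.hasDerivAt_exp x).hasDerivWithinAt) Real.exp_injective.injOn
    (fun t => ‖f t‖ₑ ^ p)
  rw [range_image_exp, Measure.restrict_univ] at h
  rw [h]
  congr 1
  apply lintegral_congr
  intro x
  rw [enorm_mul, ENNReal.mul_rpow_of_nonneg _ _ hp.le]
  congr 1
  rw [← ofReal_norm, Complex.norm_exp, ENNReal.ofReal_rpow_of_pos (Real.exp_pos _),
    ← Real.exp_mul, abs_of_pos (Real.exp_pos _)]
  congr 2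
  rw [← Complex.ofReal_div, Complex.ofReal_re]
  field_simp

theorem memLp_log_coordinates {p : ℝ} (hp : 0 < p)
    (f : Lp ℂ (ENNReal.ofReal p) (volume.restrict (Ioi (0 : ℝ)))) :
    MemLp (fun x : ℝ => Complex.exp (x / p) * f (Real.exp x)) (ENNReal.ofReal p) volume := by
  refine ⟨(Continuous.aestronglyMeasurable (by fun_prop)).mul
    ((Lp.stronglyMeasurable f).comp_measurable Real.measurable_exp).aestronglyMeasurable, ?_⟩
  rw [eLpNorm_log_coordinates hp]
  exact Lp.eLpNorm_lt_top f

variable {p : ℝ} [Fact (1 ≤ ENNReal.ofReal p)]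

/-- The linear isometry `f ↦ (x ↦ e^{x/p} f(e^x))` from `L^p((0,∞))` to `L^p(ℝ)`. -/
noncomputable def logIsometry (hp : 0 < p) :
    Lp ℂ (ENNReal.ofReal p) (volume.restrict (Ioi (0 : ℝ))) →ₗᵢ[ℂ]
      Lp ℂ (ENNReal.ofReal p) (volume : Measure ℝ) where
  toFun f := (memLp_log_coordinates hp f).toLp _
  map_add' f g := by
    rw [← MemLp.toLp_add]
    apply MemLp.toLp_congr
    filter_upwards [exp_quasiMeasurePreserving.ae_eq_comp (Lp.coeFn_add f g)] with x hx
    simp only [Function.comp_apply, Pi.add_apply] at hx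
    simp only [Pi.add_apply, hx, mul_add]
  map_smul' c f := by
    rw [RingHom.id_apply, ← MemLp.toLp_const_smul]
    apply MemLp.toLp_congr
    filter_upwards [exp_quasiMeasurePreserving.ae_eq_comp (Lp.coeFn_smul c f)] with x hx
    simp only [Function.comp_apply, Pi.smul_apply, smul_eq_mul] at hx
    simp only [Pi.smul_apply, hx, smul_eq_mul]
    ring
  norm_map' f := by
    change ‖(memLp_log_coordinates hp f).toLp _‖ = _
    rw [Lp.norm_toLp, eLpNorm_log_coordinates hp, Lp.norm_def]

theorem logIsometry_coeFn (hp : 0 < p)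
    (f : Lp ℂ (ENNReal.ofReal p) (volume.restrict (Ioi (0 : ℝ)))) :
    (logIsometry hp f : ℝ → ℂ) =ᵐ[volume]
      fun x : ℝ => Complex.exp (x / p) * f (Real.exp x) :=
  (memLp_log_coordinates hp f).coeFn_toLp

theorem logIsometry_surjective (hp : 0 < p) : Function.Surjective (logIsometry hp) := by
  intro G
  let f : ℝ → ℂ := fun t => Complex.exp (-(Real.log t / p : ℝ)) * G (Real.log t)
  have hfG : (fun x : ℝ => Complex.exp (x / p) * f (Real.exp x)) = G := by
    ext x
    simp only [f, Real.log_exp, ← mul_assoc, ← Complex.exp_add]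
    simp
  have hfm : StronglyMeasurable f := by
    refine StronglyMeasurable.mul ?_ ((Lp.stronglyMeasurable G).comp_measurable Real.measurable_log)
    exact Measurable.stronglyMeasurable (by fun_prop)
  have hf : MemLp f (ENNReal.ofReal p) (volume.restrict (Ioi (0 : ℝ))) := by
    refine ⟨hfm.aestronglyMeasurable, ?_⟩
    rw [← eLpNorm_log_coordinates hp, hfG]
    exact Lp.eLpNorm_lt_top G
  refine ⟨hf.toLp f, ?_⟩
  apply Lp.ext
  filter_upwards [logIsometry_coeFn hp (hf.toLp f),
    exp_quasiMeasurePreserving.ae_eq_comp hf.coeFn_toLp] with x h1 h2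
  simp only [Function.comp_apply] at h2
  rw [h1, h2]
  exact congrFun hfG x

/-- The substitution `s = e^{x+y}` in the integral defining the operator at `t = e^x`. -/
theorem cesaroStar_exp (β : ℝ) (f : ℝ → ℂ) (x : ℝ) :
    cesaroStar β f (Real.exp x) = ∫ y in Ioi (0 : ℝ),
      (β : ℂ) * ((((1 - Real.exp (-y)) ^ (β - 1) : ℝ) : ℂ) * f (Real.exp (x + y))) := by
  have hder : ∀ y ∈ Ioi (0 : ℝ), HasDerivWithinAt (fun y : ℝ => Real.exp (x + y))
      (Real.exp (x + y)) (Ioi 0) y := fun y _ => by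
    have := (((hasDerivAt_id y).const_add x).exp).hasDerivWithinAt (s := Ioi 0)
    simpa using this
  have hinj : InjOn (fun y : ℝ => Real.exp (x + y)) (Ioi 0) := fun a _ b _ h => by
    simpa using h
  have himg : Set.image (fun y : ℝ => Real.exp (x + y)) (Ioi 0) = Ioi (Real.exp x) := by
    ext u
    constructor
    · rintro ⟨y, hy, rfl⟩
      exact Real.exp_lt_exp.2 (lt_add_of_pos_right x hy)
    · intro hu
      have hu0 : 0 < u := (Real.exp_pos x).trans hu
      refine ⟨Real.log u - x, sub_pos.2 ((Real.lt_log_iff_exp_lt hu0).2 hu), ?_⟩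
      simp [Real.exp_log hu0]
  rw [cesaroStar, ← himg, integral_image_eq_integral_abs_deriv_smul measurableSet_Ioi hder hinj,
    ← integral_const_mul]
  refine setIntegral_congr_fun measurableSet_Ioi fun y hy => ?_
  congr 1
  rw [Complex.real_smul, ← mul_assoc, ← Complex.ofReal_mul]
  congr 2
  have hy' : 0 < 1 - Real.exp (-y) := sub_pos.2 (Real.exp_lt_one_iff.2 (neg_lt_zero.2 hy))
  have h1 : Real.exp (x + y) - Real.exp x = Real.exp (x + y) * (1 - Real.exp (-y)) := by
    rw [mul_sub, ← Real.exp_add]; simp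
  have he := Real.exp_pos (x + y)
  rw [abs_of_pos he, h1, Real.mul_rpow he.le hy'.le, Real.rpow_sub he, Real.rpow_one]
  have := (Real.rpow_pos_of_pos he β).ne'
  field_simp

end LogCoordinates

/-- The spectrum of the companion Cesàro operator `𝒞_β^*` on `L^p((0,∞),ℂ)` equals
`Γ(β+1) · closure { Γ(1/p+it)/Γ(β+1/p+it) : t ∈ ℝ }`. -/
theorem cesaroStar_spectrum
    (p : ℝ) (hp : 1 < p) (β : ℝ) (hβ : 0 < β)
    [Fact (1 ≤ ENNReal.ofReal p)]
    (T : Lp ℂ (ENNReal.ofReal p) (volume.restrict (Ioi (0 : ℝ))) →L[ℂ]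
         Lp ℂ (ENNReal.ofReal p) (volume.restrict (Ioi (0 : ℝ))))
    (hT : ∀ f : Lp ℂ (ENNReal.ofReal p) (volume.restrict (Ioi (0 : ℝ))),
      (T f : ℝ → ℂ) =ᵐ[volume.restrict (Ioi (0 : ℝ))] cesaroStar β ⇑f) :
    spectrum ℂ T =
      ((Real.Gamma (β + 1) : ℂ)) •
        closure {w : ℂ | ∃ t : ℝ,
          w = Complex.Gamma (1 / (p : ℂ) + t * Complex.I) /
              Complex.Gamma ((β : ℂ) + 1 / (p : ℂ) + t * Complex.I)} := by
  have hp0 : 0 < p := zero_lt_one.trans hp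
  let Φ : Lp ℂ (ENNReal.ofReal p) (volume.restrict (Ioi (0 : ℝ))) ≃L[ℂ]
      Lp ℂ (ENNReal.ofReal p) (volume : Measure ℝ) :=
    (LinearIsometryEquiv.ofSurjective (logIsometry hp0)
      (logIsometry_surjective hp0)).toContinuousLinearEquiv
  have hΦ : ∀ f, Φ f = logIsometry hp0 f := fun _ => rfl
  have hS : ∀ F : Lp ℂ (ENNReal.ofReal p) (volume : Measure ℝ),
      (Φ.conjContinuousAlgEquiv T F : ℝ → ℂ) =ᵐ[volume]
        fun x => ∫ y, cesaroKernel p β y * F (x + y) := by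
    intro F
    obtain ⟨f, rfl⟩ := Φ.surjective F
    rw [ContinuousLinearEquiv.conjContinuousAlgEquiv_apply_apply, Φ.symm_apply_apply, hΦ, hΦ]
    filter_upwards [logIsometry_coeFn hp0 (T f),
      exp_quasiMeasurePreserving.ae_eq_comp (hT f)] with x h1 h2
    simp only [Function.comp_apply] at h2
    rw [h1, h2, cesaroStar_exp, ← integral_const_mul, ← integral_indicator measurableSet_Ioi]
    apply integral_congr_ae
    filter_upwards [(measurePreserving_add_left volume x).quasiMeasurePreserving.ae_eq_comp
      (logIsometry_coeFn hp0 f)] with y hy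
    simp only [Function.comp_apply] at hy
    rw [hy]
    by_cases hy0 : y ∈ Ioi (0 : ℝ)
    · simp only [cesaroKernel, indicator_of_mem hy0]
      have : Complex.exp (x / p) =
          Complex.exp (-(1 / (p : ℂ)) * y) * Complex.exp (((x + y : ℝ) : ℂ) / p) := by
        rw [← Complex.exp_add]; push_cast; ring_nf
      rw [this]
      ring
    · simp only [cesaroKernel, indicator_of_notMem hy0, zero_mul]
  have hspec := spectrum_convolution ENNReal.ofReal_ne_top (integrable_cesaroKernel hp0 hβ) _ hS
  rw [AlgEquiv.spectrum_eq] at hspec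
  have hΓ : (Real.Gamma (β + 1) : ℂ) ≠ 0 := by
    exact_mod_cast (Real.Gamma_pos_of_pos (by positivity)).ne'
  rw [hspec, ← closure_smul₀' hΓ]
  congr 1
  ext w
  simp only [mem_range, mem_smul_set, mem_ofPred_eq, smul_eq_mul]
  constructor
  · rintro ⟨τ, rfl⟩
    refine ⟨_, ⟨-τ, rfl⟩, ?_⟩
    rw [← fourier_cesaroKernel hp0 hβ, neg_neg]
  · rintro ⟨_, ⟨τ, rfl⟩, rfl⟩
    exact ⟨-τ, fourier_cesaroKernel hp0 hβ τ⟩
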